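/- arXiv:math/0008224 — 2 statements merged into one kernel-verified Lean document; each statement's English description precedes it below -/
import Mathlib

section
/- Let ℓ ≥ 2 be even and X = R*_{k×k,ℓ}, with minimal-weight subspace X^{(ℓ)} = X ∩ span{u(m₁,m₂) : u ∈ A, m₁+m₂+1 = ℓ} and product u ∘ v = u⁽ˡ⁻¹⁾v ((ℓ-1)-th product) on X^{(ℓ)}. Then X^{(ℓ)} = {w(0,ℓ-1) : w ∈ A, wᵀ = w}, for all symmetric w, w' ∈ A one has w(0,ℓ-1) ∘ w'(0,ℓ-1) = -(ww'+w'w)(0,ℓ-1), and the linear map w ↦ -w(0,ℓ-1) is an isomorphism from the Jordan algebra of symmetric k×k matrices (with product w∗w' = ww'+w'w) onto (X^{(ℓ)}, ∘); hence (X^{(ℓ)}, ∘) is a simple Jordan algebra of type B, independent of ℓ. -/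
/-- The carrier of `R_{k×k} = M_k(F) ⊗ F[t₁,t₂]`: the element `u(m,n) = u ⊗ t₁^m t₂^n`
is encoded as `Finsupp.single (m, n) u`. -/
abbrev MatCarrier (F : Type*) [Field F] (k : ℕ) :=
  (ℕ × ℕ) →₀ Matrix (Fin k) (Fin k) F

/-- The operator `∂` on `R_{k×k}`:
`∂(u(m,n)) = (m+1)·u(m+1,n) + (n+1)·u(m,n+1)`. -/
noncomputable def mD (F : Type*) [Field F] (k : ℕ) :
    MatCarrier F k → MatCarrier F k :=
  fun f => f.sum fun p u =>
    (((p.1 + 1 : ℕ) : F)) • Finsupp.single (p.1 + 1, p.2) u +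
    (((p.2 + 1 : ℕ) : F)) • Finsupp.single (p.1, p.2 + 1) u

/-- The `s`-th product on `R_{k×k}`: the coefficient of `z^{-s-1}` in
`Y⁺(u(m₁,m₂),z)(v(n₁,n₂)) =
  binom(-n₁-1,m₂)·Σ_p binom(p,m₁)·(uv)(p,n₂)·z^{p-m₁-m₂-n₁-1}
  - binom(-n₂-1,m₁)·Σ_q binom(q,m₂)·(vu)(n₁,q)·z^{q-m₁-m₂-n₂-1}`,
extended bilinearly, where `binom(-a-1,b) = (-1)^b·binom(a+b,b)`. -/
noncomputable def mProd (F : Type*) [Field F] (k : ℕ) (s : ℕ)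
    (f g : MatCarrier F k) : MatCarrier F k :=
  f.sum fun p u => g.sum fun q v =>
    (if s ≤ p.1 + p.2 + q.1 then
      ((-1 : F) ^ p.2 * ((q.1 + p.2).choose p.2 : F) *
        ((p.1 + p.2 + q.1 - s).choose p.1 : F)) •
        Finsupp.single (p.1 + p.2 + q.1 - s, q.2) (u * v)
     else 0) -
    (if s ≤ p.1 + p.2 + q.2 then
      ((-1 : F) ^ p.1 * ((q.2 + p.1).choose p.1 : F) *
        ((p.1 + p.2 + q.2 - s).choose p.2 : F)) •
        Finsupp.single (q.1, p.1 + p.2 + q.2 - s) (v * u)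
     else 0)

/-- The weight space `R_{k×k}^{(n)} = span{u(m₁,m₂) : m₁ + m₂ + 1 = n}`. -/
noncomputable def mWeight (F : Type*) [Field F] (k : ℕ) (n : ℕ) :
    Submodule F (MatCarrier F k) :=
  Submodule.span F {x | ∃ (u : Matrix (Fin k) (Fin k) F) (m₁ m₂ : ℕ),
    m₁ + m₂ + 1 = n ∧ x = Finsupp.single (m₁, m₂) u}

/-- The subspace `R*_{k×k,ℓ} = span{binom(n+ℓ-1,ℓ-1)·u(m,n+ℓ-1)
- (-1)^{ℓ-1}·binom(m+ℓ-1,ℓ-1)·uᵀ(n,m+ℓ-1) : u ∈ A, m, n ∈ ℕ}` (`ℓ ≥ 1`). -/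
noncomputable def RkklStar (F : Type*) [Field F] (k ℓ : ℕ) :
    Submodule F (MatCarrier F k) :=
  Submodule.span F {x | ∃ (u : Matrix (Fin k) (Fin k) F) (m n : ℕ),
    x = (((n + ℓ - 1).choose (ℓ - 1) : F)) • Finsupp.single (m, n + ℓ - 1) u -
        ((-1 : F) ^ (ℓ - 1) * (((m + ℓ - 1).choose (ℓ - 1) : F))) •
          Finsupp.single (n, m + ℓ - 1) u.transpose}

/-- The elements `w(0,ℓ-1)` with `w` a symmetric matrix. -/
def symMinSet (F : Type*) [Field F] (k ℓ : ℕ) : Set (MatCarrier F k) :=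
  {x | ∃ w : Matrix (Fin k) (Fin k) F, w.transpose = w ∧
    x = Finsupp.single ((0 : ℕ), ℓ - 1) w}

/-!
By weight and by the exponent of `t₂`, an element of `X^{(ℓ)}` is supported at `(0, ℓ - 1)`, and
its coefficient there inherits the symmetry `wᵀ = (-1)^ℓ w` of the generators `w - (-1)^{ℓ-1} wᵀ`.
The product of such elements is the Jordan product up to sign, so everything reduces to the
simplicity of the Jordan algebra of symmetric matrices.

If a nonzero symmetric `w` lies in an ideal, nondegeneracy of the trace form gives an element
`b = wa + aw` of the ideal with `tr b ≠ 0`. Since ideals are stable under `b ↦ 2aba`, averaging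
over `a = E_ij + E_ji` produces `4 tr(b) · 1`, hence the unit.
-/

section JordanProduct

variable {R : Type*}

/-- The Jordan product `a ∗ b = ab + ba`, in the normalization without the factor `1/2`. -/
def jordanMul [Mul R] [Add R] (a b : R) : R :=
  a * b + b * a

theorem jordanMul_comm [Mul R] [AddCommMagma R] (a b : R) : jordanMul a b = jordanMul b a :=
  add_comm _ _

theorem jordanMul_neg_neg [NonUnitalNonAssocRing R] (a b : R) :
    jordanMul (-a) (-b) = jordanMul a b := by
  simp only [jordanMul, neg_mul_neg]

theorem jordanMul_one_right [NonAssocSemiring R] (a : R) : jordanMul a 1 = 2 • a := by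
  rw [jordanMul, mul_one, one_mul, two_smul]

theorem jordanMul_jordan_identity [NonUnitalRing R] (a b : R) :
    jordanMul (jordanMul (jordanMul a a) b) a = jordanMul (jordanMul a a) (jordanMul b a) := by
  simp only [jordanMul]
  noncomm_ring

theorem jordanMul_jordanMul_sub [NonUnitalRing R] (a b : R) :
    jordanMul a (jordanMul a b) - jordanMul (a * a) b = 2 • (a * b * a) := by
  simp only [jordanMul]
  noncomm_ring

end JordanProduct

section SymmetricMatrices

open Matrix

variable {n R K : Type*}

/-- The symmetrized matrix unit `E_ij + E_ji`; on the diagonal it equals `2 E_ii`. -/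
def symmUnit [DecidableEq n] [AddZeroClass R] [One R] (i j : n) : Matrix n n R :=
  single i j 1 + single j i 1

theorem isSymm_symmUnit [DecidableEq n] [AddCommMonoid R] [One R] (i j : n) :
    (symmUnit i j : Matrix n n R).IsSymm := by
  simp only [IsSymm, symmUnit, transpose_add, transpose_single, add_comm]

variable [Fintype n]

theorem isSymm_jordanMul [NonUnitalCommSemiring R] {a b : Matrix n n R} (ha : a.IsSymm)
    (hb : b.IsSymm) : (jordanMul a b).IsSymm := by
  simp only [IsSymm, jordanMul, transpose_add, transpose_mul, ha.eq, hb.eq, add_comm]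

theorem trace_jordanMul [NonUnitalCommSemiring R] (a b : Matrix n n R) :
    (jordanMul a b).trace = 2 • (a * b).trace := by
  rw [jordanMul, trace_add, trace_mul_comm b a, two_smul]

theorem trace_mul_symmUnit [DecidableEq n] [NonAssocSemiring R] {w : Matrix n n R}
    (hw : w.IsSymm) (i j : n) : (w * symmUnit i j).trace = 2 * w i j := by
  rw [symmUnit, mul_add, trace_add, trace_mul_single, trace_mul_single]
  simp [hw.apply, two_mul]

theorem sum_single_mul_mul_single [DecidableEq n] [Semiring R] (w : Matrix n n R) :
    ∑ i, ∑ j, single i j 1 * w * single i j 1 = wᵀ := by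
  rw [matrix_eq_sum_single wᵀ]
  simp

theorem sum_single_mul_mul_single_swap [DecidableEq n] [Semiring R] (w : Matrix n n R) :
    ∑ i, ∑ j, single i j 1 * w * single j i 1 = w.trace • (1 : Matrix n n R) := by
  simp_rw [single_mul_mul_single, one_mul, mul_one]
  have inner (i : n) : ∑ j, single i i (w j j) = single i i w.trace :=
    (map_sum (singleAddMonoidHom (α := R) i i) (fun j => w j j) Finset.univ).symm
  simp only [inner, sum_single_eq_diagonal, smul_one_eq_diagonal]

theorem sum_symmUnit_mul_mul_symmUnit [DecidableEq n] [Semiring R] (w : Matrix n n R) :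
    ∑ i, ∑ j, symmUnit i j * w * symmUnit i j
      = 2 • wᵀ + 2 • w.trace • (1 : Matrix n n R) := by
  have expand (i j : n) : symmUnit i j * w * symmUnit i j
      = single i j 1 * w * single i j 1 + single i j 1 * w * single j i 1
        + (single j i 1 * w * single j i 1 + single j i 1 * w * single i j 1) := by
    simp only [symmUnit, add_mul, mul_add]
    abel
  simp only [expand, Finset.sum_add_distrib]
  rw [Finset.sum_comm (f := fun i j => single j i 1 * w * single j i 1),
    Finset.sum_comm (f := fun i j => single j i 1 * w * single i j 1)]
  simp only [sum_single_mul_mul_single, sum_single_mul_mul_single_swap, two_smul]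
  abel

/-- The submodule `J` of all `n × n` matrices is stable under Jordan multiplication by symmetric
matrices. For `J` consisting of symmetric matrices, this says that `J` is an ideal of the Jordan
algebra of symmetric matrices. -/
def IsJordanStable [CommRing R] (J : Submodule R (Matrix n n R)) : Prop :=
  ∀ a : Matrix n n R, a.IsSymm → ∀ b ∈ J, jordanMul a b ∈ J

namespace IsJordanStable

theorem two_smul_mul_mul_mem [CommRing R] {J : Submodule R (Matrix n n R)}
    (hJ : IsJordanStable J) {a b : Matrix n n R} (ha : a.IsSymm) (hb : b ∈ J) :
    2 • (a * b * a) ∈ J := by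
  have haa : (a * a).IsSymm := by rw [IsSymm, transpose_mul, ha.eq]
  rw [← jordanMul_jordanMul_sub]
  exact J.sub_mem (hJ a ha _ (hJ a ha b hb)) (hJ _ haa b hb)

theorem four_mul_trace_smul_one_mem [DecidableEq n] [CommRing R] {J : Submodule R (Matrix n n R)}
    (hJ : IsJordanStable J) {b : Matrix n n R} (hb : b.IsSymm) (hbJ : b ∈ J) :
    (4 * b.trace) • (1 : Matrix n n R) ∈ J := by
  have hsum : ∑ i, ∑ j, 2 • (symmUnit i j * b * symmUnit i j) ∈ J :=
    J.sum_mem fun i _ => J.sum_mem fun j _ =>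
      hJ.two_smul_mul_mul_mem (isSymm_symmUnit i j) hbJ
  have hsplit : (4 * b.trace) • (1 : Matrix n n R)
      = ∑ i, ∑ j, 2 • (symmUnit i j * b * symmUnit i j) - 4 • b := by
    simp only [← Finset.smul_sum, sum_symmUnit_mul_mul_symmUnit, hb.eq]
    module
  rw [hsplit]
  exact J.sub_mem hsum (J.smul_of_tower_mem 4 hbJ)

variable [Field K] [NeZero (2 : K)] {J : Submodule K (Matrix n n K)}

theorem exists_isSymm_trace_ne_zero (hJ : IsJordanStable J) {w : Matrix n n K} (hw : w.IsSymm)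
    (hwJ : w ∈ J) (hw0 : w ≠ 0) : ∃ b ∈ J, b.IsSymm ∧ b.trace ≠ 0 := by
  classical
  obtain ⟨i, j, hij⟩ : ∃ i j, w i j ≠ 0 := by
    by_contra! h
    exact hw0 (Matrix.ext h)
  refine ⟨jordanMul (symmUnit i j) w, hJ _ (isSymm_symmUnit i j) w hwJ,
    isSymm_jordanMul (isSymm_symmUnit i j) hw, ?_⟩
  rw [jordanMul_comm, trace_jordanMul, trace_mul_symmUnit hw, nsmul_eq_mul, Nat.cast_ofNat]
  exact mul_ne_zero two_ne_zero (mul_ne_zero two_ne_zero hij)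

theorem one_mem [DecidableEq n] (hJ : IsJordanStable J) {w : Matrix n n K} (hw : w.IsSymm)
    (hwJ : w ∈ J) (hw0 : w ≠ 0) : (1 : Matrix n n K) ∈ J := by
  obtain ⟨b, hbJ, hb, htr⟩ := hJ.exists_isSymm_trace_ne_zero hw hwJ hw0
  have h4 : (4 : K) ≠ 0 := by
    rw [show (4 : K) = 2 * 2 by norm_num]
    exact mul_ne_zero two_ne_zero two_ne_zero
  exact (J.smul_mem_iff (mul_ne_zero h4 htr)).1 (hJ.four_mul_trace_smul_one_mem hb hbJ)

theorem mem_of_isSymm (hJ : IsJordanStable J) {w : Matrix n n K} (hw : w.IsSymm) (hwJ : w ∈ J)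
    (hw0 : w ≠ 0) {a : Matrix n n K} (ha : a.IsSymm) : a ∈ J := by
  classical
  have h2a : jordanMul a 1 ∈ J := hJ a ha 1 (hJ.one_mem hw hwJ hw0)
  rw [jordanMul_one_right, ← ofNat_smul_eq_nsmul K] at h2a
  exact (J.smul_mem_iff two_ne_zero).1 h2a

end IsJordanStable

end SymmetricMatrices

section MinimalWeight

open Matrix

variable {F : Type*} [Field F] {k ℓ : ℕ}

theorem mWeight_le_supported (n : ℕ) :
    mWeight F k n
      ≤ Finsupp.supported (Matrix (Fin k) (Fin k) F) F {p : ℕ × ℕ | p.1 + p.2 + 1 = n} := by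
  refine Submodule.span_le.2 ?_
  rintro _ ⟨u, m₁, m₂, hn, rfl⟩
  exact Finsupp.single_mem_supported F u hn

theorem RkklStar_le_supported :
    RkklStar F k ℓ ≤ Finsupp.supported (Matrix (Fin k) (Fin k) F) F {p : ℕ × ℕ | ℓ - 1 ≤ p.2} := by
  refine Submodule.span_le.2 ?_
  rintro _ ⟨u, m, n, rfl⟩
  refine Submodule.sub_mem _ (Submodule.smul_mem _ _ ?_) (Submodule.smul_mem _ _ ?_) <;>
    refine Finsupp.single_mem_supported F _ ?_ <;> simp only [Set.mem_ofPred_eq] <;> omega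

theorem eq_single_of_mem_RkklStar_of_mem_mWeight {x : MatCarrier F k} (hx : x ∈ RkklStar F k ℓ)
    (hxw : x ∈ mWeight F k ℓ) : x = Finsupp.single (0, ℓ - 1) (x (0, ℓ - 1)) := by
  refine Finsupp.eq_single_iff.2 ⟨fun p hp => Finset.mem_singleton.2 ?_, rfl⟩
  have hle : ℓ - 1 ≤ p.2 := (Finsupp.mem_supported F x).1 (RkklStar_le_supported hx) hp
  have hweight : p.1 + p.2 + 1 = ℓ :=
    (Finsupp.mem_supported F x).1 (mWeight_le_supported ℓ hxw) hp
  ext <;> simp only <;> omega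

theorem transpose_apply_of_mem_RkklStar (hℓ : 1 ≤ ℓ) {x : MatCarrier F k}
    (hx : x ∈ RkklStar F k ℓ) : (x (0, ℓ - 1))ᵀ = (-1 : F) ^ ℓ • x (0, ℓ - 1) := by
  obtain ⟨r, rfl⟩ := Nat.exists_eq_add_of_le' hℓ
  induction hx using Submodule.span_induction with
  | mem x hx =>
    obtain ⟨u, m, n, rfl⟩ := hx
    by_cases hmn : m = 0 ∧ n = 0
    · obtain ⟨rfl, rfl⟩ := hmn
      simp [pow_succ, smul_smul, ← mul_pow, sub_eq_add_neg, add_comm]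
    · simp [hmn, mt And.symm hmn]
  | zero => simp
  | add x y _ _ hx hy =>
    rw [Finsupp.add_apply, transpose_add, hx, hy, smul_add]
  | smul c x _ hx =>
    rw [Finsupp.smul_apply, transpose_smul, hx, smul_comm]

theorem single_mem_RkklStar [NeZero (2 : F)] (hℓ : 1 ≤ ℓ) {w : Matrix (Fin k) (Fin k) F}
    (hw : wᵀ = (-1 : F) ^ ℓ • w) :
    (Finsupp.single (0, ℓ - 1) w : MatCarrier F k) ∈ RkklStar F k ℓ := by
  obtain ⟨r, rfl⟩ := Nat.exists_eq_add_of_le' hℓ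
  refine ((RkklStar F k (r + 1)).smul_mem_iff (two_ne_zero (α := F))).1
    (Submodule.subset_span ⟨w, 0, 0, ?_⟩)
  simp [hw, pow_succ, two_smul, smul_smul, ← mul_pow]

theorem mem_RkklStar_inf_mWeight_iff [NeZero (2 : F)] (hℓ : 1 ≤ ℓ) {x : MatCarrier F k} :
    x ∈ RkklStar F k ℓ ⊓ mWeight F k ℓ ↔
      ∃ w : Matrix (Fin k) (Fin k) F, wᵀ = (-1 : F) ^ ℓ • w ∧ x = Finsupp.single (0, ℓ - 1) w := by
  constructor
  · rintro ⟨hx, hxw⟩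
    exact ⟨_, transpose_apply_of_mem_RkklStar hℓ hx,
      eq_single_of_mem_RkklStar_of_mem_mWeight hx hxw⟩
  · rintro ⟨w, hw, rfl⟩
    exact ⟨single_mem_RkklStar hℓ hw, Submodule.subset_span ⟨w, 0, ℓ - 1, by omega, rfl⟩⟩

theorem coe_RkklStar_inf_mWeight [NeZero (2 : F)] (hℓ : 1 ≤ ℓ) (heven : Even ℓ) :
    ((RkklStar F k ℓ ⊓ mWeight F k ℓ : Submodule F (MatCarrier F k)) : Set (MatCarrier F k))
      = symMinSet F k ℓ := by
  ext x
  rw [SetLike.mem_coe, mem_RkklStar_inf_mWeight_iff hℓ]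
  simp only [heven.neg_one_pow, one_smul, symMinSet, Set.mem_ofPred_eq]

theorem coe_span_symMinSet [NeZero (2 : F)] (hℓ : 1 ≤ ℓ) (heven : Even ℓ) :
    (Submodule.span F (symMinSet F k ℓ) : Set (MatCarrier F k)) = symMinSet F k ℓ := by
  rw [← coe_RkklStar_inf_mWeight hℓ heven, Submodule.span_eq]

theorem image_neg_single_isSymm :
    (fun w : Matrix (Fin k) (Fin k) F => -(Finsupp.single ((0 : ℕ), ℓ - 1) w : MatCarrier F k)) ''
      {w | w.IsSymm} = symMinSet F k ℓ := by
  ext x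
  constructor
  · rintro ⟨w, hw, rfl⟩
    exact ⟨-w, hw.neg, (Finsupp.single_neg _ _).symm⟩
  · rintro ⟨w, hw, rfl⟩
    exact ⟨-w, IsSymm.neg hw, by simp only [Finsupp.single_neg, neg_neg]⟩

theorem mProd_single_zero_single_zero (m : ℕ) (u v : Matrix (Fin k) (Fin k) F) :
    mProd F k m (Finsupp.single (0, m) u) (Finsupp.single (0, m) v)
      = Finsupp.single (0, m) ((-1 : F) ^ m • (u * v) - v * u) := by
  rw [mProd, Finsupp.sum_single_index, Finsupp.sum_single_index] <;>
    simp [Finsupp.single_sub, -Finsupp.single_mul]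

theorem mProd_single_single_of_odd {m : ℕ} (hm : Odd m) (u v : Matrix (Fin k) (Fin k) F) :
    mProd F k m (Finsupp.single (0, m) u) (Finsupp.single (0, m) v)
      = -Finsupp.single (0, m) (jordanMul u v) := by
  rw [mProd_single_zero_single_zero, hm.neg_one_pow, neg_one_smul, ← neg_add', Finsupp.single_neg,
    jordanMul]

theorem mProd_neg_single_neg_single_of_odd {m : ℕ} (hm : Odd m)
    (u v : Matrix (Fin k) (Fin k) F) :
    mProd F k m (-Finsupp.single (0, m) u) (-Finsupp.single (0, m) v)
      = -Finsupp.single (0, m) (jordanMul u v) := by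
  rw [← Finsupp.single_neg, ← Finsupp.single_neg, mProd_single_single_of_odd hm,
    jordanMul_neg_neg]

theorem mProd_mem_symMinSet (hodd : Odd (ℓ - 1)) {x y : MatCarrier F k}
    (hx : x ∈ symMinSet F k ℓ) (hy : y ∈ symMinSet F k ℓ) :
    mProd F k (ℓ - 1) x y ∈ symMinSet F k ℓ := by
  rw [← image_neg_single_isSymm] at hx hy ⊢
  obtain ⟨u, hu, rfl⟩ := hx
  obtain ⟨v, hv, rfl⟩ := hy
  exact ⟨_, isSymm_jordanMul hu hv, (mProd_neg_single_neg_single_of_odd hodd u v).symm⟩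

theorem mProd_comm_of_mem_symMinSet (hodd : Odd (ℓ - 1)) {x y : MatCarrier F k}
    (hx : x ∈ symMinSet F k ℓ) (hy : y ∈ symMinSet F k ℓ) :
    mProd F k (ℓ - 1) x y = mProd F k (ℓ - 1) y x := by
  obtain ⟨u, -, rfl⟩ := hx
  obtain ⟨v, -, rfl⟩ := hy
  rw [mProd_single_single_of_odd hodd, mProd_single_single_of_odd hodd, jordanMul_comm]

theorem mProd_jordan_identity_of_mem_symMinSet (hodd : Odd (ℓ - 1)) {x y : MatCarrier F k}
    (hx : x ∈ symMinSet F k ℓ) (hy : y ∈ symMinSet F k ℓ) :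
    mProd F k (ℓ - 1) (mProd F k (ℓ - 1) (mProd F k (ℓ - 1) x x) y) x
      = mProd F k (ℓ - 1) (mProd F k (ℓ - 1) x x) (mProd F k (ℓ - 1) y x) := by
  rw [← image_neg_single_isSymm] at hx hy
  obtain ⟨u, -, rfl⟩ := hx
  obtain ⟨v, -, rfl⟩ := hy
  simp only [mProd_neg_single_neg_single_of_odd hodd, jordanMul_jordan_identity]

theorem exists_mProd_ne_zero [NeZero (2 : F)] (hk : 1 ≤ k) (hodd : Odd (ℓ - 1)) :
    ∃ x ∈ symMinSet F k ℓ, ∃ y ∈ symMinSet F k ℓ, mProd F k (ℓ - 1) x y ≠ 0 := by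
  have : NeZero k := ⟨by omega⟩
  refine ⟨_, ⟨1, transpose_one, rfl⟩, _, ⟨1, transpose_one, rfl⟩, ?_⟩
  rw [mProd_single_single_of_odd hodd, neg_ne_zero, Finsupp.single_ne_zero, jordanMul_one_right,
    ← ofNat_smul_eq_nsmul F]
  exact smul_ne_zero two_ne_zero one_ne_zero

theorem isJordanStable_comap_lsingle (hodd : Odd (ℓ - 1)) {I : Submodule F (MatCarrier F k)}
    (hideal : ∀ a ∈ symMinSet F k ℓ, ∀ b ∈ I, mProd F k (ℓ - 1) a b ∈ I) :
    IsJordanStable (I.comap (Finsupp.lsingle (R := F) ((0 : ℕ), ℓ - 1))) := by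
  intro a ha b hb
  have hprod := hideal _ ⟨a, ha, rfl⟩ _ hb
  rwa [Finsupp.lsingle_apply, mProd_single_single_of_odd hodd, neg_mem_iff] at hprod

theorem eq_bot_or_eq_span_symMinSet [NeZero (2 : F)] (hℓ : 1 ≤ ℓ) (heven : Even ℓ)
    {I : Submodule F (MatCarrier F k)} (hI : I ≤ Submodule.span F (symMinSet F k ℓ))
    (hideal : ∀ a ∈ symMinSet F k ℓ, ∀ b ∈ I, mProd F k (ℓ - 1) a b ∈ I) :
    I = ⊥ ∨ I = Submodule.span F (symMinSet F k ℓ) := by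
  have hodd : Odd (ℓ - 1) := Nat.Even.sub_odd hℓ heven odd_one
  refine or_iff_not_imp_left.2 fun hbot => le_antisymm hI (Submodule.span_le.2 ?_)
  obtain ⟨x, hxI, hx0⟩ := I.exists_mem_ne_zero_of_ne_bot hbot
  obtain ⟨w, hw, rfl⟩ : x ∈ symMinSet F k ℓ := by
    rw [← coe_span_symMinSet hℓ heven]
    exact hI hxI
  rintro _ ⟨a, ha, rfl⟩
  exact (isJordanStable_comap_lsingle hodd hideal).mem_of_isSymm hw hxI
    (Finsupp.single_ne_zero.1 hx0) ha

end MinimalWeight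

theorem RkklStar_minimal_weight_jordan_typeB_general (F : Type*) [Field F]
    [NeZero (2 : F)] (k ℓ : ℕ) (hk : 1 ≤ k) (hℓ : 2 ≤ ℓ) (heven : Even ℓ) :
    ((RkklStar F k ℓ ⊓ mWeight F k ℓ : Submodule F (MatCarrier F k)) : Set (MatCarrier F k))
      = symMinSet F k ℓ ∧
    (∀ w w' : Matrix (Fin k) (Fin k) F, w.transpose = w → w'.transpose = w' →
      mProd F k (ℓ - 1) (Finsupp.single ((0 : ℕ), ℓ - 1) w)
          (Finsupp.single ((0 : ℕ), ℓ - 1) w')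
        = -(Finsupp.single ((0 : ℕ), ℓ - 1) (w * w' + w' * w))) ∧
    (Set.InjOn (fun w : Matrix (Fin k) (Fin k) F =>
        -(Finsupp.single ((0 : ℕ), ℓ - 1) w : MatCarrier F k))
      {w | w.transpose = w}) ∧
    ((fun w : Matrix (Fin k) (Fin k) F =>
        -(Finsupp.single ((0 : ℕ), ℓ - 1) w : MatCarrier F k)) ''
      {w | w.transpose = w} = symMinSet F k ℓ) ∧
    (∀ w w' : Matrix (Fin k) (Fin k) F, w.transpose = w → w'.transpose = w' →
      -(Finsupp.single ((0 : ℕ), ℓ - 1) (w * w' + w' * w) : MatCarrier F k)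
        = mProd F k (ℓ - 1) (-(Finsupp.single ((0 : ℕ), ℓ - 1) w))
            (-(Finsupp.single ((0 : ℕ), ℓ - 1) w'))) ∧
    (∀ x ∈ symMinSet F k ℓ, ∀ y ∈ symMinSet F k ℓ,
      mProd F k (ℓ - 1) x y ∈ symMinSet F k ℓ ∧
      mProd F k (ℓ - 1) x y = mProd F k (ℓ - 1) y x ∧
      mProd F k (ℓ - 1) (mProd F k (ℓ - 1) (mProd F k (ℓ - 1) x x) y) x
        = mProd F k (ℓ - 1) (mProd F k (ℓ - 1) x x) (mProd F k (ℓ - 1) y x)) ∧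
    (∃ x ∈ symMinSet F k ℓ, ∃ y ∈ symMinSet F k ℓ, mProd F k (ℓ - 1) x y ≠ 0) ∧
    (∀ I : Submodule F (MatCarrier F k),
      I ≤ Submodule.span F (symMinSet F k ℓ) →
      (∀ a ∈ symMinSet F k ℓ, ∀ b ∈ I, mProd F k (ℓ - 1) a b ∈ I) →
      I = ⊥ ∨ I = Submodule.span F (symMinSet F k ℓ)) := by
  have hodd : Odd (ℓ - 1) := Nat.Even.sub_odd (by omega) heven odd_one
  refine ⟨coe_RkklStar_inf_mWeight (by omega) heven,
    fun w w' _ _ => mProd_single_single_of_odd hodd w w',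
    fun w _ w' _ h => Finsupp.single_injective _ (neg_injective h),
    image_neg_single_isSymm,
    fun w w' _ _ => (mProd_neg_single_neg_single_of_odd hodd w w').symm,
    fun x hx y hy => ⟨mProd_mem_symMinSet hodd hx hy, mProd_comm_of_mem_symMinSet hodd hx hy,
      mProd_jordan_identity_of_mem_symMinSet hodd hx hy⟩,
    exists_mProd_ne_zero hk hodd,
    fun I hI hideal => eq_bot_or_eq_span_symMinSet (by omega) heven hI hideal⟩

/-- **Theorem 4.3, type B**: let `ℓ ≥ 2` be even and `X = R*_{k×k,ℓ}`, with
minimal-weight subspace `X^{(ℓ)} = X ∩ R_{k×k}^{(ℓ)}` and product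
`x ∘ y = x⁽ˡ⁻¹⁾y`.  Then `X^{(ℓ)} = {w(0,ℓ-1) : wᵀ = w}`, on it
`w(0,ℓ-1) ∘ w'(0,ℓ-1) = -(ww'+w'w)(0,ℓ-1)`, the map `w ↦ -w(0,ℓ-1)` is an
isomorphism from the Jordan algebra of symmetric `k×k` matrices onto
`(X^{(ℓ)}, ∘)`, and `(X^{(ℓ)}, ∘)` is a simple Jordan algebra (of type B,
independent of `ℓ`). -/
theorem RkklStar_minimal_weight_jordan_typeB (F : Type*) [Field F] [CharZero F]
    (k ℓ : ℕ) (hk : 1 ≤ k) (hℓ : 2 ≤ ℓ) (heven : Even ℓ) :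
    -- identification of the minimal-weight subspace
    ((RkklStar F k ℓ ⊓ mWeight F k ℓ : Submodule F (MatCarrier F k)) : Set (MatCarrier F k))
      = symMinSet F k ℓ ∧
    -- the product formula
    (∀ w w' : Matrix (Fin k) (Fin k) F, w.transpose = w → w'.transpose = w' →
      mProd F k (ℓ - 1) (Finsupp.single ((0 : ℕ), ℓ - 1) w)
          (Finsupp.single ((0 : ℕ), ℓ - 1) w')
        = -(Finsupp.single ((0 : ℕ), ℓ - 1) (w * w' + w' * w))) ∧
    -- w ↦ -w(0,ℓ-1) is an isomorphism from symmetric matrices onto (X^{(ℓ)}, ∘)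
    (Set.InjOn (fun w : Matrix (Fin k) (Fin k) F =>
        -(Finsupp.single ((0 : ℕ), ℓ - 1) w : MatCarrier F k))
      {w | w.transpose = w}) ∧
    ((fun w : Matrix (Fin k) (Fin k) F =>
        -(Finsupp.single ((0 : ℕ), ℓ - 1) w : MatCarrier F k)) ''
      {w | w.transpose = w} = symMinSet F k ℓ) ∧
    (∀ w w' : Matrix (Fin k) (Fin k) F, w.transpose = w → w'.transpose = w' →
      -(Finsupp.single ((0 : ℕ), ℓ - 1) (w * w' + w' * w) : MatCarrier F k)
        = mProd F k (ℓ - 1) (-(Finsupp.single ((0 : ℕ), ℓ - 1) w))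
            (-(Finsupp.single ((0 : ℕ), ℓ - 1) w'))) ∧
    -- (X^{(ℓ)}, ∘) is a simple Jordan algebra
    (∀ x ∈ symMinSet F k ℓ, ∀ y ∈ symMinSet F k ℓ,
      mProd F k (ℓ - 1) x y ∈ symMinSet F k ℓ ∧
      mProd F k (ℓ - 1) x y = mProd F k (ℓ - 1) y x ∧
      mProd F k (ℓ - 1) (mProd F k (ℓ - 1) (mProd F k (ℓ - 1) x x) y) x
        = mProd F k (ℓ - 1) (mProd F k (ℓ - 1) x x) (mProd F k (ℓ - 1) y x)) ∧
    (∃ x ∈ symMinSet F k ℓ, ∃ y ∈ symMinSet F k ℓ, mProd F k (ℓ - 1) x y ≠ 0) ∧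
    (∀ I : Submodule F (MatCarrier F k),
      I ≤ Submodule.span F (symMinSet F k ℓ) →
      (∀ a ∈ symMinSet F k ℓ, ∀ b ∈ I, mProd F k (ℓ - 1) a b ∈ I) →
      I = ⊥ ∨ I = Submodule.span F (symMinSet F k ℓ)) :=
  RkklStar_minimal_weight_jordan_typeB_general F k ℓ hk hℓ heven
end

section
/- Let ℓ ≥ 1 be odd and X = R_{k×k,ℓ}, with minimal-weight subspace X^{(ℓ)} = span{u(0,ℓ-1) : u ∈ A} and product u ∘ v = u⁽ˡ⁻¹⁾v ((ℓ-1)-th product) on X^{(ℓ)}. Then for all u, v ∈ A one has u(0,ℓ-1) ∘ v(0,ℓ-1) = (uv-vu)(0,ℓ-1); consequently (X^{(ℓ)}, ∘) is a Lie algebra and the linear map u ↦ u(0,ℓ-1) is a Lie algebra isomorphism from gl(k,F) (matrices with the commutator bracket) onto (X^{(ℓ)}, ∘), independent of ℓ. -/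
/-!
Each of the two sums in `Y⁺(u(0,n),z)(v(0,n))` contributes one term to the coefficient of `z^{-n-1}`:
`binom(-1,n)·(uv)(0,n) = (-1)ⁿ(uv)(0,n)` from `p = 0` and `(vu)(0,n)` from `q = n`. The product is
therefore `((-1)ⁿuv - vu)(0,n)`, which is the commutator as soon as `(-1)ⁿ = 1`, and skew-symmetry
and the Jacobi identity are transported from `gl(k,F)`.
-/

section MinimalWeight

attribute [local instance] LieRing.ofAssociativeRing

variable {F : Type*} [Field F] {k : ℕ}

theorem mProd_single_single (s : ℕ) (p q : ℕ × ℕ) (u v : Matrix (Fin k) (Fin k) F) :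
    mProd F k s (Finsupp.single p u) (Finsupp.single q v) =
      (if s ≤ p.1 + p.2 + q.1 then
        ((-1 : F) ^ p.2 * ((q.1 + p.2).choose p.2 : F) *
          ((p.1 + p.2 + q.1 - s).choose p.1 : F)) •
          Finsupp.single (p.1 + p.2 + q.1 - s, q.2) (u * v)
       else 0) -
      (if s ≤ p.1 + p.2 + q.2 then
        ((-1 : F) ^ p.1 * ((q.2 + p.1).choose p.1 : F) *
          ((p.1 + p.2 + q.2 - s).choose p.2 : F)) •
          Finsupp.single (q.1, p.1 + p.2 + q.2 - s) (v * u)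
       else 0) := by
  unfold mProd
  rw [Finsupp.sum_single_index, Finsupp.sum_single_index] <;> simp

theorem mProd_single_zero_self (n : ℕ) (u v : Matrix (Fin k) (Fin k) F) :
    mProd F k n (Finsupp.single (0, n) u) (Finsupp.single (0, n) v) =
      Finsupp.single (0, n) ((-1 : F) ^ n • (u * v) - v * u) := by
  rw [Finsupp.single_sub, ← Finsupp.smul_single]
  simp [mProd_single_single]

theorem mProd_single_zero_self_eq_lie {n : ℕ} (hn : (-1 : F) ^ n = 1)
    (u v : Matrix (Fin k) (Fin k) F) :
    mProd F k n (Finsupp.single (0, n) u) (Finsupp.single (0, n) v) =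
      Finsupp.single (0, n) ⁅u, v⁆ := by
  rw [mProd_single_zero_self, hn, one_smul, Ring.lie_def]

variable (F k) in
/-- The minimal-weight subspace `X^{(n+1)} = {u(0,n) : u ∈ A}` of `X = R_{k×k,n+1}`, which the
`n`-th product turns into a Lie algebra when `(-1)ⁿ = 1`. It is indexed by `n = ℓ - 1`, the exponent
of `t₂`, and `copy` makes membership unfold to `∃ u, x = u(0,n)`. -/
noncomputable def minimalWeightSpace (n : ℕ) : Submodule F (MatCarrier F k) :=
  (LinearMap.range (Finsupp.lsingle (0, n))).copy {x | ∃ u, x = Finsupp.single (0, n) u} <| by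
    ext x
    simp [eq_comm]

theorem range_single_eq_minimalWeightSpace (n : ℕ) :
    Set.range (fun u : Matrix (Fin k) (Fin k) F => (Finsupp.single (0, n) u : MatCarrier F k)) =
      minimalWeightSpace F k n :=
  Set.ext fun _ => exists_congr fun _ => eq_comm

variable {n : ℕ} {x y z : MatCarrier F k}

theorem mProd_mem_minimalWeightSpace (hx : x ∈ minimalWeightSpace F k n)
    (hy : y ∈ minimalWeightSpace F k n) : mProd F k n x y ∈ minimalWeightSpace F k n := by
  obtain ⟨u, rfl⟩ := hx
  obtain ⟨v, rfl⟩ := hy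
  exact ⟨_, mProd_single_zero_self n u v⟩

theorem mProd_skew (hn : (-1 : F) ^ n = 1) (hx : x ∈ minimalWeightSpace F k n)
    (hy : y ∈ minimalWeightSpace F k n) : mProd F k n x y = -mProd F k n y x := by
  obtain ⟨u, rfl⟩ := hx
  obtain ⟨v, rfl⟩ := hy
  rw [mProd_single_zero_self_eq_lie hn, mProd_single_zero_self_eq_lie hn, ← Finsupp.single_neg,
    lie_skew]

theorem mProd_jacobi (hn : (-1 : F) ^ n = 1) (hx : x ∈ minimalWeightSpace F k n)
    (hy : y ∈ minimalWeightSpace F k n) (hz : z ∈ minimalWeightSpace F k n) :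
    mProd F k n x (mProd F k n y z) - mProd F k n y (mProd F k n x z) =
      mProd F k n (mProd F k n x y) z := by
  obtain ⟨u, rfl⟩ := hx
  obtain ⟨v, rfl⟩ := hy
  obtain ⟨w, rfl⟩ := hz
  simp only [mProd_single_zero_self_eq_lie hn]
  rw [← Finsupp.single_sub, lie_lie]

end MinimalWeight

theorem Rkkl_minimal_weight_lie_gl_general (F : Type*) [Field F] (k : ℕ) {n : ℕ}
    (hn : (-1 : F) ^ n = 1) :
    (∀ u v : Matrix (Fin k) (Fin k) F,
      mProd F k n (Finsupp.single (0, n) u) (Finsupp.single (0, n) v) =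
        Finsupp.single (0, n) ⁅u, v⁆) ∧
    (Function.Injective fun u : Matrix (Fin k) (Fin k) F =>
      (Finsupp.single (0, n) u : MatCarrier F k)) ∧
    (Set.range (fun u : Matrix (Fin k) (Fin k) F =>
        (Finsupp.single (0, n) u : MatCarrier F k)) = minimalWeightSpace F k n) ∧
    (∀ u v : Matrix (Fin k) (Fin k) F,
      (Finsupp.single (0, n) ⁅u, v⁆ : MatCarrier F k) =
        mProd F k n (Finsupp.single (0, n) u) (Finsupp.single (0, n) v)) ∧
    (∀ x ∈ minimalWeightSpace F k n, ∀ y ∈ minimalWeightSpace F k n,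
      mProd F k n x y ∈ minimalWeightSpace F k n ∧ mProd F k n x y = -mProd F k n y x) ∧
    (∀ x ∈ minimalWeightSpace F k n, ∀ y ∈ minimalWeightSpace F k n,
      ∀ z ∈ minimalWeightSpace F k n,
      mProd F k n x (mProd F k n y z) - mProd F k n y (mProd F k n x z) =
        mProd F k n (mProd F k n x y) z) :=
  ⟨mProd_single_zero_self_eq_lie hn,
    Finsupp.single_injective _,
    range_single_eq_minimalWeightSpace n,
    fun u v => (mProd_single_zero_self_eq_lie hn u v).symm,
    fun _ hx _ hy => ⟨mProd_mem_minimalWeightSpace hx hy, mProd_skew hn hx hy⟩,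
    fun _ hx _ hy _ hz => mProd_jacobi hn hx hy hz⟩

/-- **Remark 4.4(1)** (for `R_{k×k,ℓ}`): let `ℓ ≥ 1` be odd and `X = R_{k×k,ℓ}`, with
minimal-weight subspace `X^{(ℓ)} = span{u(0,ℓ-1) : u ∈ A} = {u(0,ℓ-1) : u ∈ A}` and
product `x ∘ y = x⁽ˡ⁻¹⁾y`.  Then `u(0,ℓ-1) ∘ v(0,ℓ-1) = (uv-vu)(0,ℓ-1)`;
consequently `(X^{(ℓ)}, ∘)` is a Lie algebra and `u ↦ u(0,ℓ-1)` is a Lie algebra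
isomorphism from `gl(k,F)` onto `(X^{(ℓ)}, ∘)`, independent of `ℓ`. -/
theorem Rkkl_minimal_weight_lie_gl (F : Type*) [Field F] [CharZero F]
    (k ℓ : ℕ) (hk : 1 ≤ k) (hℓ : 1 ≤ ℓ) (hodd : Odd ℓ) :
    -- the product formula on the minimal-weight subspace
    (∀ u v : Matrix (Fin k) (Fin k) F,
      mProd F k (ℓ - 1) (Finsupp.single ((0 : ℕ), ℓ - 1) u)
          (Finsupp.single ((0 : ℕ), ℓ - 1) v)
        = Finsupp.single ((0 : ℕ), ℓ - 1) (u * v - v * u)) ∧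
    -- u ↦ u(0,ℓ-1) is a Lie algebra isomorphism from gl(k,F) onto (X^{(ℓ)}, ∘)
    (Function.Injective fun u : Matrix (Fin k) (Fin k) F =>
      (Finsupp.single ((0 : ℕ), ℓ - 1) u : MatCarrier F k)) ∧
    (Set.range (fun u : Matrix (Fin k) (Fin k) F =>
        (Finsupp.single ((0 : ℕ), ℓ - 1) u : MatCarrier F k))
      = {x : MatCarrier F k | ∃ u, x = Finsupp.single ((0 : ℕ), ℓ - 1) u}) ∧
    (∀ u v : Matrix (Fin k) (Fin k) F,
      (Finsupp.single ((0 : ℕ), ℓ - 1) (u * v - v * u) : MatCarrier F k)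
        = mProd F k (ℓ - 1) (Finsupp.single ((0 : ℕ), ℓ - 1) u)
            (Finsupp.single ((0 : ℕ), ℓ - 1) v)) ∧
    -- (X^{(ℓ)}, ∘) is a Lie algebra
    (∀ x ∈ {x : MatCarrier F k | ∃ u, x = Finsupp.single ((0 : ℕ), ℓ - 1) u},
     ∀ y ∈ {x : MatCarrier F k | ∃ u, x = Finsupp.single ((0 : ℕ), ℓ - 1) u},
      mProd F k (ℓ - 1) x y
        ∈ {x : MatCarrier F k | ∃ u, x = Finsupp.single ((0 : ℕ), ℓ - 1) u} ∧
      mProd F k (ℓ - 1) x y = -mProd F k (ℓ - 1) y x) ∧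
    (∀ x ∈ {x : MatCarrier F k | ∃ u, x = Finsupp.single ((0 : ℕ), ℓ - 1) u},
     ∀ y ∈ {x : MatCarrier F k | ∃ u, x = Finsupp.single ((0 : ℕ), ℓ - 1) u},
     ∀ z ∈ {x : MatCarrier F k | ∃ u, x = Finsupp.single ((0 : ℕ), ℓ - 1) u},
      mProd F k (ℓ - 1) x (mProd F k (ℓ - 1) y z)
          - mProd F k (ℓ - 1) y (mProd F k (ℓ - 1) x z)
        = mProd F k (ℓ - 1) (mProd F k (ℓ - 1) x y) z) :=
  Rkkl_minimal_weight_lie_gl_general F k (Nat.Odd.sub_odd hodd odd_one).neg_one_pow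
end
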